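/- arXiv:quant-ph/0203087 — 2 statements merged into one kernel-verified Lean document; each statement's English description precedes it below -/
import Mathlib

section
/- Let ρ be a density matrix on ℂ^{dA} ⊗ ℂ^{dB} of rank at most 2, say ρ = p|v1⟩⟨v1| + (1−p)|v2⟩⟨v2| with v1, v2 orthonormal and 0 ≤ p ≤ 1. Then the I-tangle of ρ satisfies τ(ρ) = tr(ρ ρ̃) + 2 λ_min (1 − tr(ρ²)), where λ_min is the smallest eigenvalue of the real symmetric 3×3 matrix M built from the tensor T_{ijkl} = tr(γ_{ij} (γ_{kl})~). -/
open Matrix Kronecker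
open scoped ComplexOrder

noncomputable section

/-- Partial trace over the second factor. -/
def ptraceA {dA dB : ℕ} (ρ : Matrix (Fin dA × Fin dB) (Fin dA × Fin dB) ℂ) :
    Matrix (Fin dA) (Fin dA) ℂ :=
  Matrix.of fun i i' => ∑ j, ρ (i, j) (i', j)

/-- Partial trace over the first factor. -/
def ptraceB {dA dB : ℕ} (ρ : Matrix (Fin dA × Fin dB) (Fin dA × Fin dB) ℂ) :
    Matrix (Fin dB) (Fin dB) ℂ :=
  Matrix.of fun j j' => ∑ i, ρ (i, j) (i, j')

/-- The universal state inverter ρ ↦ ρ̃. -/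
def inverter {dA dB : ℕ} (ρ : Matrix (Fin dA × Fin dB) (Fin dA × Fin dB) ℂ) :
    Matrix (Fin dA × Fin dB) (Fin dA × Fin dB) ℂ :=
  (Matrix.trace ρᴴ) • (1 : Matrix (Fin dA × Fin dB) (Fin dA × Fin dB) ℂ)
    - (ptraceA ρ)ᴴ ⊗ₖ (1 : Matrix (Fin dB) (Fin dB) ℂ)
    - (1 : Matrix (Fin dA) (Fin dA) ℂ) ⊗ₖ (ptraceB ρ)ᴴ
    + ρᴴ

/-- The rank-one projector |ψ⟩⟨ψ|. -/
def outer {dA dB : ℕ} (ψ : Fin dA × Fin dB → ℂ) :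
    Matrix (Fin dA × Fin dB) (Fin dA × Fin dB) ℂ :=
  Matrix.vecMulVec ψ (star ψ)

/-- A density matrix: positive semidefinite with trace one. -/
def IsDensityMatrix {m : Type*} [Fintype m] [DecidableEq m] (ρ : Matrix m m ℂ) : Prop :=
  ρ.PosSemidef ∧ ρ.trace = 1

/-- The pure-state tangle ⟨ψ| ρ̃_ψ |ψ⟩ with ρ_ψ = |ψ⟩⟨ψ|. -/
def pureTangle {dA dB : ℕ} (ψ : Fin dA × Fin dB → ℂ) : ℝ :=
  (star ψ ⬝ᵥ (inverter (outer ψ) *ᵥ ψ)).re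

/-- The I-tangle: the infimum of Σᵢ pᵢ ⟨ψᵢ| ρ̃ᵢ |ψᵢ⟩ over pure-state decompositions of ρ. -/
def Itangle {dA dB : ℕ} (ρ : Matrix (Fin dA × Fin dB) (Fin dA × Fin dB) ℂ) : ℝ :=
  sInf { t | ∃ (n : ℕ) (p : Fin n → ℝ) (ψ : Fin n → (Fin dA × Fin dB → ℂ)),
    (∀ i, 0 < p i) ∧ (∑ i, p i = 1) ∧ (∀ i, star (ψ i) ⬝ᵥ ψ i = 1) ∧
    ρ = ∑ i, (p i : ℂ) • outer (ψ i) ∧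
    t = ∑ i, p i * pureTangle (ψ i) }


/-- γ_{ij} = |v_i⟩⟨v_j| (indices in `Fin 2`, so `0,1` stand for `1,2`). -/
def gam {dA dB : ℕ} (v : Fin 2 → (Fin dA × Fin dB → ℂ)) (i j : Fin 2) :
    Matrix (Fin dA × Fin dB) (Fin dA × Fin dB) ℂ :=
  Matrix.vecMulVec (v i) (star (v j))

/-- T_{ijkl} = tr(γ_{ij} (γ_{kl})~). -/
def Ttensor {dA dB : ℕ} (v : Fin 2 → (Fin dA × Fin dB → ℂ)) (i j k l : Fin 2) : ℂ :=
  Matrix.trace (gam v i j * inverter (gam v k l))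

/-- The real symmetric 3×3 matrix M built from the tensor T (indices shifted from
`{1,2}` in the paper to `{0,1}`). -/
def Mmat {dA dB : ℕ} (v : Fin 2 → (Fin dA × Fin dB → ℂ)) : Matrix (Fin 3) (Fin 3) ℝ :=
  let T := Ttensor v
  let M11 := (T 0 1 1 0 / 4 + T 0 0 1 1 / 2 + T 1 0 0 1 / 4).re
  let M12 := (Complex.I / 4 * T 0 1 1 0 - Complex.I / 4 * T 1 0 0 1).re
  let M13 := (T 0 0 1 0 / 4 - T 1 0 1 1 / 4 + T 0 0 0 1 / 4 - T 0 1 1 1 / 4).re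
  let M22 := (-(T 0 1 1 0 / 4) + T 0 0 1 1 / 2 - T 1 0 0 1 / 4).re
  let M23 := (Complex.I / 4 * T 0 0 1 0 - Complex.I / 4 * T 0 0 0 1
      + Complex.I / 4 * T 1 0 1 1 - Complex.I / 4 * T 0 1 1 1).re
  let M33 := (T 0 0 0 0 / 4 - T 0 0 1 1 / 2 + T 1 1 1 1 / 4).re
  !![M11, M12, M13; M12, M22, M23; M13, M23, M33]

/-!
States on the span of `v 0` and `v 1` form a Bloch ball whose boundary sphere consists of the pure
states, so a pure-state decomposition of `ρ` writes its Bloch vector `r` as a convex combination of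
points of the sphere. The function `f r = tr(ρ ρ̃)` is quadratic in `r` with quadratic part `M`, and
its values on the sphere are the pure-state tangles. With `λ` the least eigenvalue of `M`, the
function `g = f - λ ‖·‖²` is convex and differs from `f` on the sphere by the constant `λ`. Jensen's
inequality for `g` bounds every decomposition from below by `f r + λ (1 - ‖r‖²)`. This bound is
attained by the two endpoints of the chord through `r` in the direction of an eigenvector for `λ`,
since `g` is affine along that chord. Finally `1 - ‖r‖² = 2 (1 - tr ρ²)`.
-/

section UnitSphere

variable {ι : Type*} [Fintype ι]

/-- `f` is a polynomial function of degree at most two whose homogeneous quadratic part is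
`x ↦ x ⬝ᵥ M *ᵥ x`. This is encoded through the defect of `f` from being affine along chords, in
which the constant and linear parts do not appear. -/
def HasQuadraticPart (f : (ι → ℝ) → ℝ) (M : Matrix ι ι ℝ) : Prop :=
  ∀ ⦃x y : ι → ℝ⦄ ⦃a b : ℝ⦄, a + b = 1 →
    a * f x + b * f y = f (a • x + b • y) + a * b * ((x - y) ⬝ᵥ (M *ᵥ (x - y)))

variable {f : (ι → ℝ) → ℝ} {M : Matrix ι ι ℝ} {lam : ℝ}

lemma HasQuadraticPart.convexOn (hf : HasQuadraticPart f M) (hM : M.PosSemidef) :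
    ConvexOn ℝ Set.univ f := by
  refine ⟨convex_univ, fun x _ y _ a b ha hb hab => ?_⟩
  have hdefect : 0 ≤ a * b * ((x - y) ⬝ᵥ (M *ᵥ (x - y))) :=
    mul_nonneg (mul_nonneg ha hb) (by simpa using hM.dotProduct_mulVec_nonneg (x - y))
  simpa only [smul_eq_mul, hf hab] using le_add_of_nonneg_right hdefect

lemma HasQuadraticPart.map_combination_of_mulVec_sub_eq_zero (hf : HasQuadraticPart f M)
    {x y : ι → ℝ} {a b : ℝ} (hab : a + b = 1) (hxy : M *ᵥ (x - y) = 0) :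
    a * f x + b * f y = f (a • x + b • y) := by
  rw [hf hab, hxy, dotProduct_zero, mul_zero, add_zero]

lemma exists_nonneg_dotProduct_self_add_smul_eq_one {r w : ι → ℝ} (hr : r ⬝ᵥ r ≤ 1)
    (hw : w ≠ 0) : ∃ t : ℝ, 0 ≤ t ∧ (r + t • w) ⬝ᵥ (r + t • w) = 1 := by
  have hpos : 0 < w ⬝ᵥ w := by simpa using dotProduct_star_self_pos_iff.2 hw
  have hdisc : 0 ≤ (w ⬝ᵥ w) * (1 - r ⬝ᵥ r) := mul_nonneg hpos.le (sub_nonneg.2 hr)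
  set root := √((r ⬝ᵥ w) ^ 2 + (w ⬝ᵥ w) * (1 - r ⬝ᵥ r))
  have hsq : root ^ 2 = (r ⬝ᵥ w) ^ 2 + (w ⬝ᵥ w) * (1 - r ⬝ᵥ r) := Real.sq_sqrt (by positivity)
  have hle : r ⬝ᵥ w ≤ root := Real.le_sqrt_of_sq_le (by linarith)
  refine ⟨(root - r ⬝ᵥ w) / (w ⬝ᵥ w), div_nonneg (sub_nonneg.2 hle) hpos.le, ?_⟩
  simp only [add_dotProduct, dotProduct_add, smul_dotProduct, dotProduct_smul, smul_eq_mul,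
    dotProduct_comm w r]
  field_simp
  linear_combination hsq

lemma exists_chord_through {r w : ι → ℝ} (hr : r ⬝ᵥ r ≤ 1) (hw : w ≠ 0) :
    ∃ (x y : ι → ℝ) (a b t : ℝ), x ⬝ᵥ x = 1 ∧ y ⬝ᵥ y = 1 ∧ 0 < a ∧ 0 < b ∧ a + b = 1 ∧
      a • x + b • y = r ∧ x - y = t • w := by
  rcases hr.eq_or_lt with hr1 | hr1
  · refine ⟨r, r, 1 / 2, 1 / 2, 0, hr1, hr1, by norm_num, by norm_num, by norm_num, ?_, by simp⟩
    rw [← add_smul, add_halves, one_smul]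
  · obtain ⟨s, hs, hs1⟩ := exists_nonneg_dotProduct_self_add_smul_eq_one hr hw
    obtain ⟨t, ht, ht1⟩ := exists_nonneg_dotProduct_self_add_smul_eq_one hr (neg_ne_zero.2 hw)
    have hs0 : 0 < s := hs.lt_of_ne' fun h => hr1.ne (by simpa [h] using hs1)
    have ht0 : 0 < t := ht.lt_of_ne' fun h => hr1.ne (by simpa [h] using ht1)
    refine ⟨_, _, t / (s + t), s / (s + t), s + t, hs1, ht1, by positivity, by positivity,
      by field_simp; ring, ?_, by module⟩
    ext k
    simp only [Pi.add_apply, Pi.smul_apply, Pi.neg_apply, smul_eq_mul]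
    field_simp
    ring

lemma hasQuadraticPart_dotProduct_self [DecidableEq ι] :
    HasQuadraticPart (fun x : ι → ℝ => x ⬝ᵥ x) 1 := by
  intro x y a b hab
  obtain rfl : b = 1 - a := by linarith
  simp only [one_mulVec, add_dotProduct, dotProduct_add, sub_dotProduct, dotProduct_sub,
    smul_dotProduct, dotProduct_smul, smul_eq_mul, dotProduct_comm y x]
  ring

lemma HasQuadraticPart.sub_mul_dotProduct_self [DecidableEq ι] (hf : HasQuadraticPart f M)
    (lam : ℝ) :
    HasQuadraticPart (fun x => f x - lam * (x ⬝ᵥ x)) (M - lam • 1) := by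
  intro x y a b hab
  have hnorm := hasQuadraticPart_dotProduct_self (x := x) (y := y) hab
  simp only [sub_mulVec, smul_mulVec, dotProduct_sub (x - y) (M *ᵥ _), dotProduct_smul,
    smul_eq_mul] at hnorm ⊢
  linear_combination hf hab - lam * hnorm

lemma HasQuadraticPart.le_sum_of_dotProduct_self_eq_one [DecidableEq ι]
    (hf : HasQuadraticPart f M) (hM : (M - lam • 1).PosSemidef) {κ : Type*} [Fintype κ]
    {p : κ → ℝ} (hp : ∀ i, 0 ≤ p i) (hsum : ∑ i, p i = 1) {x : κ → ι → ℝ}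
    (hx : ∀ i, x i ⬝ᵥ x i = 1) :
    f (∑ i, p i • x i) + lam * (1 - (∑ i, p i • x i) ⬝ᵥ ∑ i, p i • x i) ≤
      ∑ i, p i * f (x i) := by
  have jensen := ((hf.sub_mul_dotProduct_self lam).convexOn hM).map_sum_le (t := Finset.univ)
    (w := p) (p := x) (fun i _ => hp i) hsum (fun i _ => Set.mem_univ _)
  simp only [hx, smul_eq_mul, mul_one, mul_sub, Finset.sum_sub_distrib, ← Finset.sum_mul, hsum,
    one_mul] at jensen
  linarith

lemma HasQuadraticPart.map_combination_of_eigenvector (hf : HasQuadraticPart f M)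
    {w : ι → ℝ} (hw : M *ᵥ w = lam • w) {x y : ι → ℝ} (hx : x ⬝ᵥ x = 1) (hy : y ⬝ᵥ y = 1)
    {a b t : ℝ} (hab : a + b = 1) (hxy : x - y = t • w) :
    a * f x + b * f y =
      f (a • x + b • y) + lam * (1 - (a • x + b • y) ⬝ᵥ (a • x + b • y)) := by
  classical
  have hker : (M - lam • 1) *ᵥ (x - y) = 0 := by
    rw [hxy, mulVec_smul, sub_mulVec, smul_mulVec, one_mulVec, hw, sub_self, smul_zero]
  have haffine :=
    (hf.sub_mul_dotProduct_self lam).map_combination_of_mulVec_sub_eq_zero hab hker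
  rw [hx, hy] at haffine
  linear_combination haffine + lam * hab

lemma posSemidef_sub_smul_one_of_mem_lowerBounds [DecidableEq ι] (hM : M.IsHermitian)
    (hlam : lam ∈ lowerBounds {μ : ℝ | ∃ w : ι → ℝ, w ≠ 0 ∧ M *ᵥ w = μ • w}) :
    (M - lam • 1).PosSemidef := by
  have hH : (M - lam • (1 : Matrix ι ι ℝ)).IsHermitian := hM.sub (by simp [IsHermitian])
  refine hH.posSemidef_iff_eigenvalues_nonneg.2 fun i => ?_
  have hne : (hH.eigenvectorBasis i).ofLp ≠ 0 := by
    simpa using hH.eigenvectorBasis.orthonormal.ne_zero i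
  have heigen := hH.mulVec_eigenvectorBasis i
  rw [sub_mulVec, smul_mulVec, one_mulVec, sub_eq_iff_eq_add, ← add_smul] at heigen
  have := hlam ⟨_, hne, heigen⟩
  simpa using this

end UnitSphere

section OrthonormalFamily

variable {n κ : Type*} [Fintype n] [Fintype κ] [DecidableEq κ] {v : κ → n → ℂ}

lemma star_sum_smul_dotProduct_sum_smul
    (hv : ∀ i j, star (v i) ⬝ᵥ v j = if i = j then 1 else 0) (z : κ → ℂ) :
    star (∑ k, z k • v k) ⬝ᵥ (∑ k, z k • v k) = star z ⬝ᵥ z := by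
  simp only [star_sum, star_smul, sum_dotProduct, dotProduct_sum, smul_dotProduct, dotProduct_smul,
    hv, smul_eq_mul, mul_ite, mul_one, mul_zero, Finset.sum_ite_eq', Finset.mem_univ, if_true]
  exact dotProduct_comm z (star z)

lemma eq_sum_dotProduct_smul_of_forall_orthogonal
    (hv : ∀ i j, star (v i) ⬝ᵥ v j = if i = j then 1 else 0) {ψ : n → ℂ}
    (hψ : ∀ x, (∀ k, star (v k) ⬝ᵥ x = 0) → star x ⬝ᵥ ψ = 0) :
    ψ = ∑ k, (star (v k) ⬝ᵥ ψ) • v k := by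
  set residual := ψ - ∑ k, (star (v k) ⬝ᵥ ψ) • v k with hres
  have horth (k : κ) : star (v k) ⬝ᵥ residual = 0 := by
    simp [hres, dotProduct_sub, dotProduct_sum, hv]
  have horth' (k : κ) : star residual ⬝ᵥ v k = 0 := by
    rw [star_dotProduct, horth, star_zero]
  have hself : star residual ⬝ᵥ residual = 0 := by
    nth_rw 2 [hres]
    simp only [dotProduct_sub, hψ residual horth, dotProduct_sum, dotProduct_smul, horth',
      smul_zero, Finset.sum_const_zero, sub_zero]
  exact sub_eq_zero.1 (dotProduct_star_self_eq_zero.1 hself)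

end OrthonormalFamily

section Inverter

variable {dA dB : ℕ}

lemma inverter_add (X Y : Matrix (Fin dA × Fin dB) (Fin dA × Fin dB) ℂ) :
    inverter (X + Y) = inverter X + inverter Y := by
  have hA : ptraceA (X + Y) = ptraceA X + ptraceA Y := by
    ext; simp [ptraceA, Finset.sum_add_distrib]
  have hB : ptraceB (X + Y) = ptraceB X + ptraceB Y := by
    ext; simp [ptraceB, Finset.sum_add_distrib]
  simp only [inverter, hA, hB, conjTranspose_add, trace_add, add_smul, add_kronecker, kronecker_add]
  abel

lemma inverter_smul (z : ℂ) (X : Matrix (Fin dA × Fin dB) (Fin dA × Fin dB) ℂ) :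
    inverter (z • X) = star z • inverter X := by
  have hA : ptraceA (z • X) = z • ptraceA X := by
    ext; simp [ptraceA, Finset.mul_sum]
  have hB : ptraceB (z • X) = z • ptraceB X := by
    ext; simp [ptraceB, Finset.mul_sum]
  simp only [inverter, hA, hB, conjTranspose_smul, trace_smul, smul_kronecker, kronecker_smul,
    smul_sub, smul_add, smul_smul, smul_eq_mul]

/-- The sesquilinear form `(X, Y) ↦ tr(X Ỹ)`, conjugate-linear in `Y` because the inverter is. -/
def inverterForm : Matrix (Fin dA × Fin dB) (Fin dA × Fin dB) ℂ →ₗ[ℂ]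
    Matrix (Fin dA × Fin dB) (Fin dA × Fin dB) ℂ →ₛₗ[starRingEnd ℂ] ℂ :=
  LinearMap.mk₂'ₛₗ (RingHom.id ℂ) (starRingEnd ℂ) (fun X Y => trace (X * inverter Y))
    (fun X X' Y => by rw [add_mul, trace_add])
    (fun z X Y => by rw [smul_mul_assoc, trace_smul, RingHom.id_apply])
    (fun X Y Y' => by rw [inverter_add, mul_add, trace_add])
    (fun z X Y => by rw [inverter_smul, mul_smul_comm, trace_smul, Complex.star_def])

lemma inverterForm_apply (X Y : Matrix (Fin dA × Fin dB) (Fin dA × Fin dB) ℂ) :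
    inverterForm X Y = trace (X * inverter Y) :=
  rfl

lemma inverterForm_combination (X Y : Matrix (Fin dA × Fin dB) (Fin dA × Fin dB) ℂ) {a b : ℝ}
    (hab : a + b = 1) :
    a * inverterForm X X + b * inverterForm Y Y =
      inverterForm ((a : ℂ) • X + (b : ℂ) • Y) ((a : ℂ) • X + (b : ℂ) • Y)
        + a * b * inverterForm (X - Y) (X - Y) := by
  obtain rfl : b = 1 - a := by linarith
  simp only [map_add, map_sub, map_smulₛₗ, LinearMap.add_apply, LinearMap.sub_apply,
    LinearMap.smul_apply, RingHom.id_apply, Complex.conj_ofReal, smul_eq_mul]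
  push_cast
  ring

lemma pureTangle_eq_re_inverterForm (ψ : Fin dA × Fin dB → ℂ) :
    pureTangle ψ = (inverterForm (outer ψ) (outer ψ)).re := by
  rw [inverterForm_apply, pureTangle, dotProduct_mulVec, dotProduct_comm, ← trace_vecMulVec,
    ← vecMulVec_mul, outer]

/-- The polarization of the `2 × 2` minor `a (x, y) * a (x', y') - a (x, y') * a (x', y)` of the
coefficient matrix of a vector, where `z = (x, y)` and `z' = (x', y')`. -/
def polarMinor (a d : Fin dA × Fin dB → ℂ) (z z' : Fin dA × Fin dB) : ℂ :=
  a z * d z' + d z * a z' - a (z.1, z'.2) * d (z'.1, z.2) - d (z.1, z'.2) * a (z'.1, z.2)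

lemma polarMinor_comm (a d : Fin dA × Fin dB → ℂ) (z z' : Fin dA × Fin dB) :
    polarMinor a d z z' = polarMinor d a z z' := by
  simp only [polarMinor]; ring

lemma polarMinor_swap (a d : Fin dA × Fin dB → ℂ) (z z' : Fin dA × Fin dB) :
    polarMinor a d z z' = polarMinor a d z' z := by
  simp only [polarMinor]; ring

lemma kronecker_one_mulVec_apply (A : Matrix (Fin dA) (Fin dA) ℂ) (a : Fin dA × Fin dB → ℂ)
    (z : Fin dA × Fin dB) :
    ((A ⊗ₖ (1 : Matrix (Fin dB) (Fin dB) ℂ)) *ᵥ a) z = ∑ x, A z.1 x * a (x, z.2) := by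
  simp [mulVec, dotProduct, Fintype.sum_prod_type, one_apply]

lemma one_kronecker_mulVec_apply (B : Matrix (Fin dB) (Fin dB) ℂ) (a : Fin dA × Fin dB → ℂ)
    (z : Fin dA × Fin dB) :
    (((1 : Matrix (Fin dA) (Fin dA) ℂ) ⊗ₖ B) *ᵥ a) z = ∑ y, B z.2 y * a (z.1, y) := by
  simp [mulVec, dotProduct, Fintype.sum_prod_type_right, one_apply]

lemma inverter_vecMulVec_mulVec_apply (a c d : Fin dA × Fin dB → ℂ) (z : Fin dA × Fin dB) :
    (inverter (vecMulVec c (star d)) *ᵥ a) z = ∑ z', star (c z') * polarMinor a d z z' := by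
  have htrace : trace (vecMulVec d (star c)) * a z = ∑ z', star (c z') * (a z * d z') := by
    rw [trace_vecMulVec, dotProduct, Finset.sum_mul]
    exact Finset.sum_congr rfl fun z' _ => by rw [Pi.star_apply]; ring
  have hA : (((ptraceA (vecMulVec c (star d)))ᴴ ⊗ₖ 1) *ᵥ a) z =
      ∑ z', star (c z') * (d (z.1, z'.2) * a (z'.1, z.2)) := by
    simp only [kronecker_one_mulVec_apply, conjTranspose_apply, ptraceA, of_apply, star_sum,
      vecMulVec_apply, Pi.star_apply, star_mul', star_star, Finset.sum_mul,
      Fintype.sum_prod_type, mul_assoc]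
  have hB : ((1 ⊗ₖ (ptraceB (vecMulVec c (star d)))ᴴ) *ᵥ a) z =
      ∑ z', star (c z') * (a (z.1, z'.2) * d (z'.1, z.2)) := by
    simp only [one_kronecker_mulVec_apply, conjTranspose_apply, ptraceB, of_apply, star_sum,
      vecMulVec_apply, Pi.star_apply, star_mul', star_star, Finset.sum_mul,
      Fintype.sum_prod_type_right, mul_assoc, mul_comm (d _)]
  have hρ : (vecMulVec d (star c) *ᵥ a) z = ∑ z', star (c z') * (d z * a z') := by
    simp only [mulVec, dotProduct, vecMulVec_apply, Pi.star_apply, mul_left_comm, mul_assoc]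
  rw [inverter, conjTranspose_vecMulVec, star_star, add_mulVec, sub_mulVec, sub_mulVec,
    Pi.add_apply, Pi.sub_apply, Pi.sub_apply, smul_mulVec, one_mulVec, Pi.smul_apply, smul_eq_mul,
    htrace, hA, hB, hρ]
  simp only [polarMinor, mul_sub, mul_add, Finset.sum_add_distrib, Finset.sum_sub_distrib]
  ring

lemma inverterForm_vecMulVec (a b c d : Fin dA × Fin dB → ℂ) :
    inverterForm (vecMulVec a (star b)) (vecMulVec c (star d)) =
      ∑ z, ∑ z', star (b z) * star (c z') * polarMinor a d z z' := by
  rw [inverterForm_apply, vecMulVec_mul, trace_vecMulVec, dotProduct_comm, ← dotProduct_mulVec]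
  simp only [dotProduct, inverter_vecMulVec_mulVec_apply, Finset.mul_sum, Pi.star_apply, mul_assoc]

variable (v : Fin 2 → Fin dA × Fin dB → ℂ) (i j k l : Fin 2)

lemma inverterForm_gam : inverterForm (gam v i j) (gam v k l) = Ttensor v i j k l :=
  rfl

lemma Ttensor_swap_inner : Ttensor v i j k l = Ttensor v i k j l := by
  simp only [← inverterForm_gam, gam, inverterForm_vecMulVec]
  rw [Finset.sum_comm]
  refine Finset.sum_congr rfl fun z _ => Finset.sum_congr rfl fun z' _ => ?_
  rw [polarMinor_swap, mul_comm (star _)]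

lemma Ttensor_swap_outer : Ttensor v i j k l = Ttensor v l j k i := by
  simp only [← inverterForm_gam, gam, inverterForm_vecMulVec, polarMinor_comm (v i)]

end Inverter

section BlochBall

variable {dA dB : ℕ} (v : Fin 2 → Fin dA × Fin dB → ℂ)

/-- The Pauli operators on the span of `v 0` and `v 1`, extended by zero. The second one has the
sign for which `Mmat v` is the matrix of `X ↦ tr(X X̃)` in half Pauli coordinates. -/
def pauli : Fin 3 → Matrix (Fin dA × Fin dB) (Fin dA × Fin dB) ℂ :=
  ![gam v 0 1 + gam v 1 0, Complex.I • (gam v 0 1 - gam v 1 0), gam v 0 0 - gam v 1 1]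

/-- The Hermitian operator on the span of `v 0` and `v 1` with Bloch vector `r`. For orthonormal
`v` it has trace one, and it is a state exactly when `r` lies in the closed unit ball. -/
def blochMatrix (r : Fin 3 → ℝ) : Matrix (Fin dA × Fin dB) (Fin dA × Fin dB) ℂ :=
  (1 / 2 : ℂ) • (gam v 0 0 + gam v 1 1 + ∑ k, (r k : ℂ) • pauli v k)

/-- The Bloch vector of the qubit pure state with amplitudes `z`, in the sign convention of
`pauli`. -/
def blochVector (z : Fin 2 → ℂ) : Fin 3 → ℝ :=
  ![2 * (z 0 * star (z 1)).re, 2 * (z 0 * star (z 1)).im,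
    Complex.normSq (z 0) - Complex.normSq (z 1)]

lemma blochMatrix_sum {κ : Type*} [Fintype κ] {p : κ → ℝ} (hp : ∑ i, p i = 1)
    (r : κ → Fin 3 → ℝ) :
    ∑ i, (p i : ℂ) • blochMatrix v (r i) = blochMatrix v (∑ i, p i • r i) := by
  have hpC : ∑ i, (p i : ℂ) = 1 := by exact_mod_cast hp
  simp only [blochMatrix, smul_comm _ (1 / 2 : ℂ), ← Finset.smul_sum]
  congr 1
  simp only [smul_add, Finset.sum_add_distrib, ← Finset.sum_smul, hpC, one_smul]
  congr 1
  simp only [Finset.smul_sum, Finset.sum_apply, Pi.smul_apply, smul_eq_mul, Complex.ofReal_sum,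
    Complex.ofReal_mul, Finset.sum_smul, mul_smul]
  exact Finset.sum_comm

lemma blochMatrix_combination {a b : ℝ} (hab : a + b = 1) (x y : Fin 3 → ℝ) :
    (a : ℂ) • blochMatrix v x + (b : ℂ) • blochMatrix v y = blochMatrix v (a • x + b • y) := by
  simpa [Fin.sum_univ_two] using
    blochMatrix_sum v (p := ![a, b]) (by simpa [Fin.sum_univ_two] using hab) ![x, y]

lemma smul_outer_add_smul_outer (p : ℝ) :
    (p : ℂ) • outer (v 0) + ((1 - p : ℝ) : ℂ) • outer (v 1) =
      blochMatrix v ![0, 0, 2 * p - 1] := by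
  simp only [blochMatrix, pauli, Fin.sum_univ_three, outer, gam]
  simp only [cons_val, Complex.ofReal_zero, Complex.ofReal_one, Complex.ofReal_ofNat,
    Complex.ofReal_mul, Complex.ofReal_sub]
  module

lemma star_dotProduct_self_fin_two (z : Fin 2 → ℂ) :
    star z ⬝ᵥ z = ((Complex.normSq (z 0) + Complex.normSq (z 1) : ℝ) : ℂ) := by
  simp [dotProduct, Complex.normSq_eq_conj_mul_self]

lemma outer_sum_smul {z : Fin 2 → ℂ} (hz : star z ⬝ᵥ z = 1) :
    outer (∑ k, z k • v k) = blochMatrix v (blochVector z) := by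
  have hnorm : z 0 * star (z 0) + z 1 * star (z 1) = 1 := by
    simpa [dotProduct, mul_comm] using hz
  have hre : ((2 * (z 0 * star (z 1)).re : ℝ) : ℂ) = z 0 * star (z 1) + z 1 * star (z 0) := by
    rw [← Complex.add_conj, ← Complex.star_def, star_mul, star_star]
  have him : ((2 * (z 0 * star (z 1)).im : ℝ) : ℂ) * Complex.I =
      z 0 * star (z 1) - z 1 * star (z 0) := by
    rw [← Complex.sub_conj, ← Complex.star_def, star_mul, star_star]
  have hdiff : ((Complex.normSq (z 0) - Complex.normSq (z 1) : ℝ) : ℂ) =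
      z 0 * star (z 0) - z 1 * star (z 1) := by
    simp [Complex.mul_conj]
  simp only [blochMatrix, pauli, blochVector, Fin.sum_univ_three, cons_val, smul_smul, hre, him,
    hdiff]
  ext x y
  simp only [outer, gam, vecMulVec_apply, Fin.sum_univ_two, Matrix.add_apply, Matrix.sub_apply,
    Matrix.smul_apply, Pi.add_apply, Pi.smul_apply, Pi.star_apply, star_add, star_smul, smul_eq_mul]
  linear_combination ((v 0 x * star (v 0 y) + v 1 x * star (v 1 y)) / 2) * hnorm

lemma blochVector_dotProduct_self {z : Fin 2 → ℂ} (hz : star z ⬝ᵥ z = 1) :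
    blochVector z ⬝ᵥ blochVector z = 1 := by
  have hnorm : Complex.normSq (z 0) + Complex.normSq (z 1) = 1 := by
    rw [star_dotProduct_self_fin_two] at hz
    exact_mod_cast hz
  have hmul : (z 0 * star (z 1)).re ^ 2 + (z 0 * star (z 1)).im ^ 2 =
      Complex.normSq (z 0) * Complex.normSq (z 1) := by
    rw [← Complex.normSq_conj (z 1), ← Complex.normSq_mul, Complex.normSq_apply, Complex.star_def]
    ring
  simp only [dotProduct, Fin.sum_univ_three, blochVector, cons_val]
  linear_combination 4 * hmul + (Complex.normSq (z 0) + Complex.normSq (z 1) + 1) * hnorm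

lemma exists_mul_star_eq_of_normSq_eq {s t : ℝ} (hs : 0 ≤ s) (ht : 0 ≤ t) {w : ℂ}
    (hw : Complex.normSq w = s * t) :
    ∃ a b : ℂ, Complex.normSq a = s ∧ Complex.normSq b = t ∧ a * star b = w := by
  rcases hs.eq_or_lt with rfl | hs
  · obtain rfl : w = 0 := Complex.normSq_eq_zero.1 (by rw [hw, zero_mul])
    exact ⟨0, √t, map_zero _, by rw [Complex.normSq_ofReal, Real.mul_self_sqrt ht], zero_mul _⟩
  · have hroot : ((√s : ℝ) : ℂ) ≠ 0 := by exact_mod_cast (Real.sqrt_pos.2 hs).ne'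
    refine ⟨√s, star w / √s, ?_, ?_, ?_⟩
    · rw [Complex.normSq_ofReal, Real.mul_self_sqrt hs.le]
    · rw [Complex.normSq_div, Complex.star_def, Complex.normSq_conj, hw, Complex.normSq_ofReal,
        Real.mul_self_sqrt hs.le, mul_div_cancel_left₀ t hs.ne']
    · rw [star_div₀, star_star, Complex.star_def, Complex.conj_ofReal, mul_div_cancel₀ w hroot]

lemma exists_blochVector_eq {r : Fin 3 → ℝ} (hr : r ⬝ᵥ r = 1) :
    ∃ z : Fin 2 → ℂ, star z ⬝ᵥ z = 1 ∧ blochVector z = r := by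
  simp only [dotProduct, Fin.sum_univ_three] at hr
  have hoff : Complex.normSq ⟨r 0 / 2, r 1 / 2⟩ = (1 + r 2) / 2 * ((1 - r 2) / 2) := by
    rw [Complex.normSq_mk]
    linear_combination hr / 4
  have hr2 : |r 2| ≤ 1 := by
    rw [← sq_le_one_iff_abs_le_one]
    nlinarith
  obtain ⟨hlower, hupper⟩ := abs_le.1 hr2
  obtain ⟨a, b, ha, hb, hab⟩ := exists_mul_star_eq_of_normSq_eq (by linarith) (by linarith) hoff
  refine ⟨![a, b], ?_, ?_⟩
  · rw [star_dotProduct_self_fin_two, Complex.ofReal_eq_one]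
    simp only [cons_val, ha, hb]
    ring
  · simp only [blochVector, cons_val, ha, hb, hab]
    ext k
    fin_cases k <;> simp only [Fin.zero_eta, Fin.mk_one, Fin.reduceFinMk, cons_val] <;> ring

variable {v}

lemma trace_gam_mul_gam (hv : ∀ i j, star (v i) ⬝ᵥ v j = if i = j then 1 else 0)
    (i j k l : Fin 2) :
    trace (gam v i j * gam v k l) = if j = k ∧ i = l then 1 else 0 := by
  rw [gam, gam, vecMulVec_mul_vecMulVec, trace_vecMulVec, dotProduct_smul, dotProduct_comm (v i),
    hv, hv, smul_eq_mul, ite_zero_mul_ite_zero, one_mul]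
  simp only [eq_comm]

lemma trace_blochMatrix_mul_blochMatrix
    (hv : ∀ i j, star (v i) ⬝ᵥ v j = if i = j then 1 else 0) (r s : Fin 3 → ℝ) :
    trace (blochMatrix v r * blochMatrix v s) = ((1 + r ⬝ᵥ s) / 2 : ℝ) := by
  simp only [blochMatrix, pauli, Fin.sum_univ_three, cons_val, mul_add, add_mul, mul_sub, sub_mul,
    smul_add, smul_sub, smul_mul_assoc, mul_smul_comm, trace_add, trace_sub, trace_smul,
    trace_gam_mul_gam hv, dotProduct]
  simp only [and_self, ↓reduceIte, smul_eq_mul, one_ne_zero, zero_ne_one, and_true, and_false]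
  push_cast
  linear_combination (-(r 1 : ℂ) * s 1 / 2) * Complex.I_sq

lemma blochMatrix_injective (hv : ∀ i j, star (v i) ⬝ᵥ v j = if i = j then 1 else 0) :
    Function.Injective (blochMatrix v) := by
  intro r s hrs
  have hcross := trace_blochMatrix_mul_blochMatrix hv r s
  have hss := trace_blochMatrix_mul_blochMatrix hv s s
  have hrr := trace_blochMatrix_mul_blochMatrix hv r r
  rw [hrs] at hcross hrr
  have hinner : (1 + r ⬝ᵥ s) / 2 = (1 + s ⬝ᵥ s) / 2 :=
    Complex.ofReal_injective (hcross.symm.trans hss)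
  have hnorm : (1 + r ⬝ᵥ r) / 2 = (1 + s ⬝ᵥ s) / 2 :=
    Complex.ofReal_injective (hrr.symm.trans hss)
  refine sub_eq_zero.1 (dotProduct_self_eq_zero.1 ?_)
  simp only [sub_dotProduct, dotProduct_sub, dotProduct_comm s r]
  linarith

lemma blochMatrix_mulVec_eq_zero (r : Fin 3 → ℝ) {x : Fin dA × Fin dB → ℂ}
    (hx : ∀ k, star (v k) ⬝ᵥ x = 0) : blochMatrix v r *ᵥ x = 0 := by
  have hgam (i j : Fin 2) : gam v i j *ᵥ x = 0 := by
    rw [gam, vecMulVec_mulVec, hx, MulOpposite.op_zero, zero_smul]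
  simp [blochMatrix, pauli, Fin.sum_univ_three, add_mulVec, sub_mulVec, smul_mulVec, hgam]

variable (v)

lemma Mmat_apply (j k : Fin 3) : Mmat v j k = (inverterForm (pauli v j) (pauli v k)).re / 4 := by
  have h0100 := Ttensor_swap_inner v 0 1 0 0
  have h1000 := Ttensor_swap_outer v 1 0 0 0
  have h1101 := Ttensor_swap_inner v 1 1 0 1
  have h1110 := Ttensor_swap_outer v 1 1 1 0
  have h0101 := Ttensor_swap_inner v 0 1 0 1
  have h1100 := (Ttensor_swap_outer v 1 1 0 0).trans h0101
  have h1010 := (Ttensor_swap_inner v 1 0 1 0).trans h1100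
  fin_cases j <;> fin_cases k <;>
    simp [Mmat, pauli, inverterForm_gam, h0100, h1000, h1101, h1110, h0101, h1100, h1010] <;> ring

lemma re_inverterForm_blochMatrix_sub (x y : Fin 3 → ℝ) :
    (inverterForm (blochMatrix v x - blochMatrix v y) (blochMatrix v x - blochMatrix v y)).re =
      (x - y) ⬝ᵥ (Mmat v *ᵥ (x - y)) := by
  have hdiff : blochMatrix v x - blochMatrix v y =
      ∑ k, (((x - y) k / 2 : ℝ) : ℂ) • pauli v k := by
    simp only [blochMatrix, ← smul_sub, add_sub_add_left_eq_sub, ← Finset.sum_sub_distrib,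
      ← sub_smul, Finset.smul_sum, smul_smul, Pi.sub_apply, Complex.ofReal_sub, Complex.ofReal_div,
      Complex.ofReal_ofNat, one_div_mul_eq_div]
  simp only [hdiff, map_sum, map_smulₛₗ, LinearMap.sum_apply, LinearMap.smul_apply,
    RingHom.id_apply, Complex.conj_ofReal, smul_eq_mul, Complex.re_sum, Complex.re_ofReal_mul,
    dotProduct, mulVec, Mmat_apply, Finset.mul_sum]
  rw [Finset.sum_comm]
  exact Finset.sum_congr rfl fun j _ => Finset.sum_congr rfl fun k _ => by ring

lemma hasQuadraticPart_re_inverterForm_blochMatrix :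
    HasQuadraticPart (fun r => (inverterForm (blochMatrix v r) (blochMatrix v r)).re)
      (Mmat v) := by
  intro x y a b hab
  have := congrArg Complex.re (inverterForm_combination (blochMatrix v x) (blochMatrix v y) hab)
  rw [blochMatrix_combination v hab] at this
  simpa only [Complex.add_re, ← Complex.ofReal_mul, Complex.re_ofReal_mul,
    re_inverterForm_blochMatrix_sub] using this

end BlochBall

section Decomposition

variable {dA dB : ℕ}

lemma star_dotProduct_eq_zero_of_sum_outer_mulVec_eq_zero {κ : Type*} [Fintype κ] {p : κ → ℝ}
    (hp : ∀ i, 0 < p i) {ψ : κ → Fin dA × Fin dB → ℂ} {x : Fin dA × Fin dB → ℂ}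
    (hx : (∑ i, (p i : ℂ) • outer (ψ i)) *ᵥ x = 0) (i : κ) : star x ⬝ᵥ ψ i = 0 := by
  have hterm (i : κ) : star x ⬝ᵥ (((p i : ℂ) • outer (ψ i)) *ᵥ x) =
      ((p i * Complex.normSq (star x ⬝ᵥ ψ i) : ℝ) : ℂ) := by
    rw [smul_mulVec, outer, vecMulVec_mulVec, op_smul_eq_smul, dotProduct_smul, dotProduct_smul,
      smul_eq_mul, smul_eq_mul, star_dotProduct (ψ i), mul_comm (star _), Complex.star_def,
      Complex.mul_conj, Complex.ofReal_mul]
  have hsum : ∑ i, p i * Complex.normSq (star x ⬝ᵥ ψ i) = 0 := by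
    have := congrArg (star x ⬝ᵥ ·) hx
    simp only [sum_mulVec, dotProduct_sum, hterm, dotProduct_zero] at this
    exact_mod_cast this
  have hzero := (Finset.sum_eq_zero_iff_of_nonneg fun i _ =>
    mul_nonneg (hp i).le (Complex.normSq_nonneg _)).1 hsum i (Finset.mem_univ i)
  exact Complex.normSq_eq_zero.1 ((mul_eq_zero.1 hzero).resolve_left (hp i).ne')

variable {v : Fin 2 → Fin dA × Fin dB → ℂ}

lemma exists_outer_eq_blochMatrix_of_decomposition
    (hv : ∀ i j, star (v i) ⬝ᵥ v j = if i = j then 1 else 0) {κ : Type*} [Fintype κ] {p : κ → ℝ}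
    (hp : ∀ i, 0 < p i) {ψ : κ → Fin dA × Fin dB → ℂ} (hψ : ∀ i, star (ψ i) ⬝ᵥ ψ i = 1)
    {r : Fin 3 → ℝ} (hdec : blochMatrix v r = ∑ i, (p i : ℂ) • outer (ψ i)) (i : κ) :
    ∃ x : Fin 3 → ℝ, x ⬝ᵥ x = 1 ∧ outer (ψ i) = blochMatrix v x := by
  have hspan := eq_sum_dotProduct_smul_of_forall_orthogonal hv (ψ := ψ i) fun x hx =>
    star_dotProduct_eq_zero_of_sum_outer_mulVec_eq_zero hp
      (hdec ▸ blochMatrix_mulVec_eq_zero r hx) i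
  set z : Fin 2 → ℂ := fun k => star (v k) ⬝ᵥ ψ i
  have hz : star z ⬝ᵥ z = 1 := by
    rw [← star_sum_smul_dotProduct_sum_smul hv, ← hspan, hψ]
  exact ⟨blochVector z, blochVector_dotProduct_self hz, by rw [hspan, outer_sum_smul v hz]⟩

lemma exists_outer_eq_blochMatrix_of_dotProduct_self
    (hv : ∀ i j, star (v i) ⬝ᵥ v j = if i = j then 1 else 0) {x : Fin 3 → ℝ} (hx : x ⬝ᵥ x = 1) :
    ∃ ψ : Fin dA × Fin dB → ℂ, star ψ ⬝ᵥ ψ = 1 ∧ outer ψ = blochMatrix v x := by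
  obtain ⟨z, hz, rfl⟩ := exists_blochVector_eq hx
  exact ⟨∑ k, z k • v k, by rw [star_sum_smul_dotProduct_sum_smul hv, hz], outer_sum_smul v hz⟩

lemma le_sum_pureTangle_of_decomposition
    (hv : ∀ i j, star (v i) ⬝ᵥ v j = if i = j then 1 else 0) {lam : ℝ}
    (hM : (Mmat v - lam • 1).PosSemidef) {κ : Type*} [Fintype κ] {p : κ → ℝ} (hp : ∀ i, 0 < p i)
    (hsum : ∑ i, p i = 1) {ψ : κ → Fin dA × Fin dB → ℂ} (hψ : ∀ i, star (ψ i) ⬝ᵥ ψ i = 1)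
    {r : Fin 3 → ℝ} (hdec : blochMatrix v r = ∑ i, (p i : ℂ) • outer (ψ i)) :
    (inverterForm (blochMatrix v r) (blochMatrix v r)).re + lam * (1 - r ⬝ᵥ r) ≤
      ∑ i, p i * pureTangle (ψ i) := by
  choose x hx hψx using exists_outer_eq_blochMatrix_of_decomposition hv hp hψ hdec
  obtain rfl : r = ∑ i, p i • x i :=
    blochMatrix_injective hv <| by simp only [hdec, hψx, blochMatrix_sum v hsum]
  simp only [pureTangle_eq_re_inverterForm, hψx]
  exact (hasQuadraticPart_re_inverterForm_blochMatrix v).le_sum_of_dotProduct_self_eq_one hM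
    (fun i => (hp i).le) hsum hx

lemma exists_decomposition_of_eigenvector
    (hv : ∀ i j, star (v i) ⬝ᵥ v j = if i = j then 1 else 0) {lam : ℝ} {w : Fin 3 → ℝ}
    (hw0 : w ≠ 0) (hw : Mmat v *ᵥ w = lam • w) {r : Fin 3 → ℝ} (hr : r ⬝ᵥ r ≤ 1) :
    ∃ (p : Fin 2 → ℝ) (ψ : Fin 2 → Fin dA × Fin dB → ℂ), (∀ i, 0 < p i) ∧ ∑ i, p i = 1 ∧
      (∀ i, star (ψ i) ⬝ᵥ ψ i = 1) ∧ blochMatrix v r = ∑ i, (p i : ℂ) • outer (ψ i) ∧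
      (inverterForm (blochMatrix v r) (blochMatrix v r)).re + lam * (1 - r ⬝ᵥ r) =
        ∑ i, p i * pureTangle (ψ i) := by
  obtain ⟨x, y, a, b, t, hx, hy, ha, hb, hab, rfl, hxy⟩ := exists_chord_through hr hw0
  obtain ⟨φ, hφ, hφx⟩ := exists_outer_eq_blochMatrix_of_dotProduct_self hv hx
  obtain ⟨χ, hχ, hχy⟩ := exists_outer_eq_blochMatrix_of_dotProduct_self hv hy
  have hvalue := (hasQuadraticPart_re_inverterForm_blochMatrix v).map_combination_of_eigenvector hw
    hx hy hab hxy
  refine ⟨![a, b], ![φ, χ], ?_, ?_, ?_, ?_, ?_⟩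
  · simp [Fin.forall_fin_two, ha, hb]
  · simp [hab]
  · simp [Fin.forall_fin_two, hφ, hχ]
  · simp [hφx, hχy, ← blochMatrix_combination v hab]
  · simpa [pureTangle_eq_re_inverterForm, hφx, hχy] using hvalue.symm

lemma Mmat_isHermitian (v : Fin 2 → Fin dA × Fin dB → ℂ) : (Mmat v).IsHermitian := by
  ext j k
  fin_cases j <;> fin_cases k <;> rfl

theorem itangle_rank_two_general (v : Fin 2 → Fin dA × Fin dB → ℂ)
    (hortho : ∀ i j, star (v i) ⬝ᵥ v j = if i = j then 1 else 0)
    (r : Fin 3 → ℝ) (hr : r ⬝ᵥ r ≤ 1) (lam : ℝ)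
    (hlam : IsLeast {μ : ℝ | ∃ w : Fin 3 → ℝ, w ≠ 0 ∧ Mmat v *ᵥ w = μ • w} lam) :
    Itangle (blochMatrix v r) = (trace (blochMatrix v r * inverter (blochMatrix v r))).re
      + 2 * lam * (1 - (trace (blochMatrix v r * blochMatrix v r)).re) := by
  have hM := posSemidef_sub_smul_one_of_mem_lowerBounds (Mmat_isHermitian v) hlam.2
  obtain ⟨w, hw0, hw⟩ := hlam.1
  have hvalue : (trace (blochMatrix v r * inverter (blochMatrix v r))).re
      + 2 * lam * (1 - (trace (blochMatrix v r * blochMatrix v r)).re) =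
      (inverterForm (blochMatrix v r) (blochMatrix v r)).re + lam * (1 - r ⬝ᵥ r) := by
    rw [trace_blochMatrix_mul_blochMatrix hortho, Complex.ofReal_re, inverterForm_apply]
    ring
  rw [hvalue]
  refine IsLeast.csInf_eq ⟨⟨2, exists_decomposition_of_eigenvector hortho hw0 hw hr⟩, ?_⟩
  rintro _ ⟨n, p, ψ, hp, hsum, hψ, hdec, rfl⟩
  exact le_sum_pureTangle_of_decomposition hortho hM hp hsum hψ hdec

end Decomposition

/-- **Main theorem.** For a rank-≤2 density matrix ρ = p|v₁⟩⟨v₁| + (1−p)|v₂⟩⟨v₂| of a pair of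
qudits, the I-tangle is τ(ρ) = tr(ρρ̃) + 2 λ_min (1 − tr(ρ²)), where λ_min is the smallest
eigenvalue of the real symmetric 3×3 matrix M. -/
theorem itangle_rank_two {dA dB : ℕ} (p : ℝ) (hp0 : 0 ≤ p) (hp1 : p ≤ 1)
    (v : Fin 2 → (Fin dA × Fin dB → ℂ))
    (hortho : ∀ i j, star (v i) ⬝ᵥ v j = if i = j then 1 else 0)
    (ρ : Matrix (Fin dA × Fin dB) (Fin dA × Fin dB) ℂ)
    (hρ : ρ = (p : ℂ) • outer (v 0) + ((1 - p : ℝ) : ℂ) • outer (v 1))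
    (lam : ℝ)
    (hlam : IsLeast {μ : ℝ | ∃ w : Fin 3 → ℝ, w ≠ 0 ∧ Mmat v *ᵥ w = μ • w} lam) :
    Itangle ρ = (Matrix.trace (ρ * inverter ρ)).re
      + 2 * lam * (1 - (Matrix.trace (ρ * ρ)).re) := by
  rw [hρ, smul_outer_add_smul_outer]
  exact itangle_rank_two_general v hortho _
    (by simp only [cons_dotProduct_cons, dotProduct_of_isEmpty]; nlinarith) lam hlam
end
end

section
/- Let ρ be a density matrix on ℂ² ⊗ ℂ^{d} (a qubit and a qudit) of rank at most 2. Then the entanglement of formation satisfies F(ρ) ≤ H(1/2 + (1/2)√(1 − τ(ρ))), where τ(ρ) is the I-tangle of ρ and H is the binary entropy function. -/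
open Matrix Kronecker
open scoped ComplexOrder

noncomputable section

/-- Binary entropy H(y) = −y log₂ y − (1−y) log₂ (1−y) (with 0 log₂ 0 = 0, which is
automatic since `Real.logb 2 0 = 0`). -/
def binEnt (y : ℝ) : ℝ := -(y * Real.logb 2 y) - (1 - y) * Real.logb 2 (1 - y)

/-- Von Neumann entropy S(σ) = −Σ_k λ_k log₂ λ_k of a Hermitian matrix (junk value 0
on non-Hermitian matrices). -/
def vnEntropy {n : ℕ} (σ : Matrix (Fin n) (Fin n) ℂ) : ℝ :=
  if h : σ.IsHermitian then ∑ k, -(h.eigenvalues k * Real.logb 2 (h.eigenvalues k)) else 0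

/-- The entanglement E(ψ) = S(ρ_A^ψ) of a pure state. -/
def pureEnt {dA dB : ℕ} (ψ : Fin dA × Fin dB → ℂ) : ℝ :=
  vnEntropy (ptraceA (outer ψ))

/-- The entanglement of formation: the infimum of Σᵢ pᵢ E(ψᵢ) over pure-state
decompositions of ρ. -/
def EoF {dA dB : ℕ} (ρ : Matrix (Fin dA × Fin dB) (Fin dA × Fin dB) ℂ) : ℝ :=
  sInf { t | ∃ (n : ℕ) (p : Fin n → ℝ) (ψ : Fin n → (Fin dA × Fin dB → ℂ)),
    (∀ i, 0 < p i) ∧ (∑ i, p i = 1) ∧ (∀ i, star (ψ i) ⬝ᵥ ψ i = 1) ∧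
    ρ = ∑ i, (p i : ℂ) • outer (ψ i) ∧
    t = ∑ i, p i * pureEnt (ψ i) }

/-! The entropy of entanglement of a pure qubit–qudit state is a function of its tangle,
`E(ψ) = H(1/2 + √(1 - τ(ψ))/2)`: the reduced qubit state has trace one and determinant `τ(ψ)/4`,
so its two eigenvalues are `1/2 ± √(1 - τ(ψ))/2`. With `s = √(1 - τ)`, the derivative of this
function of `τ` is a positive multiple of `artanh s / s = ∑ s²ᵏ / (2k + 1)`, which increases with
`s` and hence decreases with `τ`, so the function is concave. By Jensen's inequality every
pure-state decomposition then has average entropy at most the function of its average tangle, and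
continuity carries the bound over to the infimum. -/

open Set

section ConvexRoof

variable {dA dB : ℕ} {ρ : Matrix (Fin dA × Fin dB) (Fin dA × Fin dB) ℂ}

/-- The weights `p` and unit vectors `ψ` form a pure-state decomposition of `ρ`. -/
structure IsPureDecomposition {ι : Type*} [Fintype ι]
    (ρ : Matrix (Fin dA × Fin dB) (Fin dA × Fin dB) ℂ) (p : ι → ℝ)
    (ψ : ι → Fin dA × Fin dB → ℂ) : Prop where
  pos : ∀ i, 0 < p i
  sum_eq_one : ∑ i, p i = 1
  unit : ∀ i, star (ψ i) ⬝ᵥ ψ i = 1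
  eq_sum : ρ = ∑ i, (p i : ℂ) • outer (ψ i)

/-- The averages of a function of pure states over the finite pure-state decompositions of `ρ`. -/
def ensembleAverages (f : (Fin dA × Fin dB → ℂ) → ℝ)
    (ρ : Matrix (Fin dA × Fin dB) (Fin dA × Fin dB) ℂ) : Set ℝ :=
  {t | ∃ (n : ℕ) (p : Fin n → ℝ) (ψ : Fin n → Fin dA × Fin dB → ℂ),
    IsPureDecomposition ρ p ψ ∧ t = ∑ i, p i * f (ψ i)}

/-- The convex roof of a function of pure states, the common form of the I-tangle and of the
entanglement of formation. It has the junk value `0` if `ρ` has no pure-state decomposition. -/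
def convexRoof (f : (Fin dA × Fin dB → ℂ) → ℝ)
    (ρ : Matrix (Fin dA × Fin dB) (Fin dA × Fin dB) ℂ) : ℝ :=
  sInf (ensembleAverages f ρ)

theorem isPureDecomposition_iff {ι : Type*} [Fintype ι] {p : ι → ℝ}
    {ψ : ι → Fin dA × Fin dB → ℂ} :
    IsPureDecomposition ρ p ψ ↔ (∀ i, 0 < p i) ∧ ∑ i, p i = 1 ∧
      (∀ i, star (ψ i) ⬝ᵥ ψ i = 1) ∧ ρ = ∑ i, (p i : ℂ) • outer (ψ i) :=
  ⟨fun ⟨hpos, hsum, hunit, heq⟩ => ⟨hpos, hsum, hunit, heq⟩,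
    fun ⟨hpos, hsum, hunit, heq⟩ => ⟨hpos, hsum, hunit, heq⟩⟩

theorem Itangle_eq_convexRoof : Itangle ρ = convexRoof pureTangle ρ := by
  simp only [Itangle, convexRoof, ensembleAverages, isPureDecomposition_iff, and_assoc]

theorem EoF_eq_convexRoof : EoF ρ = convexRoof pureEnt ρ := by
  simp only [EoF, convexRoof, ensembleAverages, isPureDecomposition_iff, and_assoc]

theorem ensembleAverages_subset {f : (Fin dA × Fin dB → ℂ) → ℝ} {s : Set ℝ} (hs : Convex ℝ s)
    (hf : ∀ ψ, star ψ ⬝ᵥ ψ = 1 → f ψ ∈ s) : ensembleAverages f ρ ⊆ s := by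
  rintro _ ⟨n, p, ψ, hψ, rfl⟩
  exact hs.sum_mem (fun i _ => (hψ.pos i).le) hψ.sum_eq_one fun i _ => hf _ (hψ.unit i)

theorem convexRoof_le_of_mem {f : (Fin dA × Fin dB → ℂ) → ℝ} {c t : ℝ}
    (hf : ∀ ψ, star ψ ⬝ᵥ ψ = 1 → c ≤ f ψ) (ht : t ∈ ensembleAverages f ρ) :
    convexRoof f ρ ≤ t :=
  csInf_le ⟨c, fun _ h => ensembleAverages_subset (convex_Ici c) hf h⟩ ht

theorem convexRoof_le_map_convexRoof {e f : (Fin dA × Fin dB → ℂ) → ℝ} {g : ℝ → ℝ} {s : Set ℝ}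
    {c : ℝ} (hg : ConcaveOn ℝ s g) (hgcont : ContinuousOn g s) (hs : IsClosed s)
    (hsbdd : BddBelow s) (hf : ∀ ψ, star ψ ⬝ᵥ ψ = 1 → f ψ ∈ s)
    (he : ∀ ψ, star ψ ⬝ᵥ ψ = 1 → c ≤ e ψ)
    (hef : ∀ ψ, star ψ ⬝ᵥ ψ = 1 → e ψ ≤ g (f ψ))
    (hρ : (ensembleAverages f ρ).Nonempty) :
    convexRoof e ρ ≤ g (convexRoof f ρ) := by
  have subset_s : ensembleAverages f ρ ⊆ s := ensembleAverages_subset hg.1 hf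
  have subset_le : ensembleAverages f ρ ⊆ s ∩ g ⁻¹' Ici (convexRoof e ρ) := by
    refine fun t ht => ⟨subset_s ht, ?_⟩
    obtain ⟨n, p, ψ, hψ, rfl⟩ := ht
    calc convexRoof e ρ
        ≤ ∑ i, p i * e (ψ i) := convexRoof_le_of_mem he ⟨n, p, ψ, hψ, rfl⟩
      _ ≤ ∑ i, p i * g (f (ψ i)) := Finset.sum_le_sum fun i _ =>
          mul_le_mul_of_nonneg_left (hef _ (hψ.unit i)) (hψ.pos i).le
      _ ≤ g (∑ i, p i * f (ψ i)) := hg.le_map_sum (fun i _ => (hψ.pos i).le) hψ.sum_eq_one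
          fun i _ => hf _ (hψ.unit i)
  have closed_le : IsClosed (s ∩ g ⁻¹' Ici (convexRoof e ρ)) :=
    hgcont.preimage_isClosed_of_isClosed hs isClosed_Ici
  exact (closure_minimal subset_le closed_le
    (csInf_mem_closure hρ (hsbdd.mono subset_s))).2

end ConvexRoof

section SpectralDecomposition

theorem sum_eigenvalues_eq_one {𝕜 n : Type*} [RCLike 𝕜] [Fintype n] [DecidableEq n]
    {A : Matrix n n 𝕜} (hA : A.IsHermitian) (htrace : A.trace = 1) :
    ∑ k, hA.eigenvalues k = 1 := by
  rw [hA.trace_eq_sum_eigenvalues] at htrace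
  exact_mod_cast htrace

theorem star_eigenvectorBasis_dotProduct_self {𝕜 n : Type*} [RCLike 𝕜] [Fintype n] [DecidableEq n]
    {A : Matrix n n 𝕜} (hA : A.IsHermitian) (k : n) :
    star (hA.eigenvectorBasis k : n → 𝕜) ⬝ᵥ hA.eigenvectorBasis k = 1 := by
  rw [dotProduct_comm, ← EuclideanSpace.inner_eq_star_dotProduct]
  exact inner_self_eq_one_of_norm_eq_one (hA.eigenvectorBasis.orthonormal.1 k)

theorem isHermitian_eq_sum_eigenvalues_smul_vecMulVec {𝕜 n : Type*} [RCLike 𝕜] [Fintype n]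
    [DecidableEq n] {A : Matrix n n 𝕜} (hA : A.IsHermitian) :
    A = ∑ k, (hA.eigenvalues k : 𝕜) •
      vecMulVec (hA.eigenvectorBasis k) (star (hA.eigenvectorBasis k : n → 𝕜)) := by
  conv_lhs => rw [hA.spectral_theorem, Unitary.conjStarAlgAut_apply]
  ext i j
  simp [Matrix.mul_apply, Matrix.sum_apply, diagonal_apply, vecMulVec_apply, star_apply,
    RCLike.real_smul_eq_coe_mul, mul_assoc, mul_left_comm]

variable {dA dB : ℕ} {ρ : Matrix (Fin dA × Fin dB) (Fin dA × Fin dB) ℂ}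

theorem exists_isPureDecomposition_of_nonneg {ι : Type*} [Fintype ι] {p : ι → ℝ}
    {ψ : ι → Fin dA × Fin dB → ℂ} (hp : ∀ i, 0 ≤ p i) (hsum : ∑ i, p i = 1)
    (hψ : ∀ i, star (ψ i) ⬝ᵥ ψ i = 1) (hρ : ρ = ∑ i, (p i : ℂ) • outer (ψ i)) :
    ∃ (n : ℕ) (q : Fin n → ℝ) (φ : Fin n → Fin dA × Fin dB → ℂ), IsPureDecomposition ρ q φ := by
  classical
  let e := (Fintype.equivFin {i // 0 < p i}).symm
  have p_eq_zero (i : ι) (hi : ¬0 < p i) : p i = 0 := le_antisymm (not_lt.1 hi) (hp i)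
  refine ⟨_, fun k => p (e k), fun k => ψ (e k), fun k => (e k).2, ?_, fun k => hψ _, ?_⟩
  · rw [e.sum_comp fun i => p i, ← hsum]
    exact (Finset.sum_congr_set {i | 0 < p i} p _ (fun _ _ => rfl) p_eq_zero).symm
  · rw [e.sum_comp fun i => (p i : ℂ) • outer (ψ i), hρ]
    exact Finset.sum_congr_set {i | 0 < p i} _ _ (fun _ _ => rfl)
      fun i hi => by simp [p_eq_zero i hi]

theorem IsDensityMatrix.exists_isPureDecomposition (hρ : IsDensityMatrix ρ) :
    ∃ (n : ℕ) (p : Fin n → ℝ) (ψ : Fin n → Fin dA × Fin dB → ℂ), IsPureDecomposition ρ p ψ := by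
  have hherm : ρ.IsHermitian := hρ.1.isHermitian
  exact exists_isPureDecomposition_of_nonneg hρ.1.eigenvalues_nonneg
    (sum_eigenvalues_eq_one hherm hρ.2) (star_eigenvectorBasis_dotProduct_self hherm)
    (isHermitian_eq_sum_eigenvalues_smul_vecMulVec hherm)

theorem IsDensityMatrix.ensembleAverages_nonempty (hρ : IsDensityMatrix ρ)
    (f : (Fin dA × Fin dB → ℂ) → ℝ) : (ensembleAverages f ρ).Nonempty :=
  let ⟨n, p, ψ, hψ⟩ := hρ.exists_isPureDecomposition
  ⟨_, n, p, ψ, hψ, rfl⟩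

end SpectralDecomposition

section PureTangle

variable {dA dB : ℕ}

/-- The coefficients of `ψ` in the product basis as a matrix; the reduced states of `|ψ⟩⟨ψ|` are
its two Gram matrices, the second one transposed. -/
def coeffMatrix (ψ : Fin dA × Fin dB → ℂ) : Matrix (Fin dA) (Fin dB) ℂ :=
  Matrix.of fun i j => ψ (i, j)

theorem ptraceA_outer (ψ : Fin dA × Fin dB → ℂ) :
    ptraceA (outer ψ) = coeffMatrix ψ * (coeffMatrix ψ)ᴴ := by
  ext i i'
  simp [ptraceA, outer, coeffMatrix, Matrix.mul_apply, vecMulVec_apply]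

theorem ptraceB_outer (ψ : Fin dA × Fin dB → ℂ) :
    ptraceB (outer ψ) = ((coeffMatrix ψ)ᴴ * coeffMatrix ψ)ᵀ := by
  ext j j'
  simp [ptraceB, outer, coeffMatrix, Matrix.mul_apply, vecMulVec_apply, mul_comm]

theorem trace_ptraceA (ρ : Matrix (Fin dA × Fin dB) (Fin dA × Fin dB) ℂ) :
    (ptraceA ρ).trace = ρ.trace := by
  simp [ptraceA, Matrix.trace, Fintype.sum_prod_type]

theorem trace_outer (ψ : Fin dA × Fin dB → ℂ) : (outer ψ).trace = star ψ ⬝ᵥ ψ := by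
  rw [outer, trace_vecMulVec, dotProduct_comm]

theorem isDensityMatrix_ptraceA_outer {ψ : Fin dA × Fin dB → ℂ} (hψ : star ψ ⬝ᵥ ψ = 1) :
    IsDensityMatrix (ptraceA (outer ψ)) := by
  refine ⟨?_, by rw [trace_ptraceA, trace_outer, hψ]⟩
  rw [ptraceA_outer]
  exact posSemidef_self_mul_conjTranspose _

theorem trace_ptraceB_outer_mul_self (ψ : Fin dA × Fin dB → ℂ) :
    (ptraceB (outer ψ) * ptraceB (outer ψ)).trace =
      (ptraceA (outer ψ) * ptraceA (outer ψ)).trace := by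
  rw [ptraceA_outer, ptraceB_outer, ← transpose_mul, trace_transpose, Matrix.mul_assoc,
    trace_mul_comm, Matrix.mul_assoc, Matrix.mul_assoc, Matrix.mul_assoc]

theorem trace_kronecker_one_mul (M : Matrix (Fin dA) (Fin dA) ℂ)
    (ρ : Matrix (Fin dA × Fin dB) (Fin dA × Fin dB) ℂ) :
    ((M ⊗ₖ (1 : Matrix (Fin dB) (Fin dB) ℂ)) * ρ).trace = (M * ptraceA ρ).trace := by
  simp only [trace, diag_apply, Matrix.mul_apply, kroneckerMap_apply, Matrix.one_apply, mul_ite,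
    mul_one, mul_zero, ite_mul, zero_mul, Fintype.sum_prod_type, Finset.sum_ite_eq,
    Finset.mem_univ, ↓reduceIte, ptraceA, of_apply, Finset.mul_sum]
  exact Finset.sum_congr rfl fun i _ => Finset.sum_comm

theorem trace_one_kronecker_mul (N : Matrix (Fin dB) (Fin dB) ℂ)
    (ρ : Matrix (Fin dA × Fin dB) (Fin dA × Fin dB) ℂ) :
    (((1 : Matrix (Fin dA) (Fin dA) ℂ) ⊗ₖ N) * ρ).trace = (N * ptraceB ρ).trace := by
  simp only [trace, diag_apply, Matrix.mul_apply, kroneckerMap_apply, Matrix.one_apply, ite_mul,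
    one_mul, zero_mul, Fintype.sum_prod_type, Finset.sum_ite_irrel, Finset.sum_const_zero,
    Finset.sum_ite_eq, Finset.mem_univ, ↓reduceIte, ptraceB, of_apply, Finset.mul_sum]
  exact Finset.sum_comm.trans (Finset.sum_congr rfl fun i _ => Finset.sum_comm)

theorem isHermitian_outer (ψ : Fin dA × Fin dB → ℂ) : (outer ψ).IsHermitian := by
  simp [Matrix.IsHermitian, outer, conjTranspose_vecMulVec]

theorem isHermitian_ptraceA {ρ : Matrix (Fin dA × Fin dB) (Fin dA × Fin dB) ℂ}
    (hρ : ρ.IsHermitian) : (ptraceA ρ).IsHermitian := by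
  ext i i'
  simp [ptraceA, hρ.apply]

theorem isHermitian_ptraceB {ρ : Matrix (Fin dA × Fin dB) (Fin dA × Fin dB) ℂ}
    (hρ : ρ.IsHermitian) : (ptraceB ρ).IsHermitian := by
  ext j j'
  simp [ptraceB, hρ.apply]

theorem pureTangle_eq_two_mul_one_sub_re_trace {ψ : Fin dA × Fin dB → ℂ} (hψ : star ψ ⬝ᵥ ψ = 1) :
    pureTangle ψ = 2 * (1 - (ptraceA (outer ψ) * ptraceA (outer ψ)).trace.re) := by
  have trace_eq_one : (outer ψ).trace = 1 := by rw [trace_outer, hψ]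
  have mul_self : outer ψ * outer ψ = outer ψ := by
    simp [outer, vecMulVec_mul_vecMulVec, hψ]
  have trace_inverter_mul : (inverter (outer ψ) * outer ψ).trace =
      2 * (1 - (ptraceA (outer ψ) * ptraceA (outer ψ)).trace) := by
    rw [inverter, (isHermitian_outer ψ).eq, (isHermitian_ptraceA (isHermitian_outer ψ)).eq,
      (isHermitian_ptraceB (isHermitian_outer ψ)).eq, trace_eq_one, one_smul, Matrix.add_mul,
      Matrix.sub_mul, Matrix.sub_mul, Matrix.one_mul, mul_self, trace_add, trace_sub, trace_sub,
      trace_kronecker_one_mul, trace_one_kronecker_mul, trace_ptraceB_outer_mul_self,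
      trace_eq_one]
    ring
  have expectation_eq_trace : star ψ ⬝ᵥ (inverter (outer ψ) *ᵥ ψ) =
      (inverter (outer ψ) * outer ψ).trace := by
    rw [outer, mul_vecMulVec, trace_vecMulVec, dotProduct_comm]
  rw [pureTangle, expectation_eq_trace, trace_inverter_mul]
  simp

end PureTangle

section Qubit

theorem trace_mul_self_fin_two {R : Type*} [CommRing R] (M : Matrix (Fin 2) (Fin 2) R) :
    (M * M).trace = M.trace ^ 2 - 2 * M.det := by
  simp only [trace_fin_two, det_fin_two, Matrix.mul_apply, Fin.sum_univ_two]
  ring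

theorem pureTangle_eq_four_mul_re_det {d : ℕ} {ψ : Fin 2 × Fin d → ℂ}
    (hψ : star ψ ⬝ᵥ ψ = 1) : pureTangle ψ = 4 * (ptraceA (outer ψ)).det.re := by
  rw [pureTangle_eq_two_mul_one_sub_re_trace hψ, trace_mul_self_fin_two,
    (isDensityMatrix_ptraceA_outer hψ).2]
  simp only [one_pow, Complex.sub_re, Complex.one_re, Complex.mul_re, Complex.re_ofNat,
    Complex.im_ofNat]
  ring

variable {σ : Matrix (Fin 2) (Fin 2) ℂ}

theorem eigenvalues_one_eq_one_sub (hσ : σ.IsHermitian) (htrace : σ.trace = 1) :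
    hσ.eigenvalues 1 = 1 - hσ.eigenvalues 0 := by
  rw [eq_sub_iff_add_eq', ← Fin.sum_univ_two, sum_eigenvalues_eq_one hσ htrace]

theorem re_det_eq_eigenvalues_zero_mul_one_sub (hσ : σ.IsHermitian) (htrace : σ.trace = 1) :
    σ.det.re = hσ.eigenvalues 0 * (1 - hσ.eigenvalues 0) := by
  rw [hσ.det_eq_prod_eigenvalues, Fin.prod_univ_two, eigenvalues_one_eq_one_sub hσ htrace]
  simp

theorem vnEntropy_eq_binEnt_eigenvalues_zero (hσ : σ.IsHermitian) (htrace : σ.trace = 1) :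
    vnEntropy σ = binEnt (hσ.eigenvalues 0) := by
  rw [vnEntropy, dif_pos hσ, Fin.sum_univ_two, eigenvalues_one_eq_one_sub hσ htrace, binEnt]
  ring

theorem IsDensityMatrix.four_mul_re_det_mem_Icc (hσ : IsDensityMatrix σ) :
    4 * σ.det.re ∈ Icc (0 : ℝ) 1 := by
  have det_nonneg : 0 ≤ σ.det.re := (Complex.le_def.1 hσ.1.det_nonneg).1
  refine ⟨by positivity, ?_⟩
  rw [re_det_eq_eigenvalues_zero_mul_one_sub hσ.1.isHermitian hσ.2]
  nlinarith [sq_nonneg (2 * hσ.1.isHermitian.eigenvalues 0 - 1)]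

theorem pureTangle_mem_Icc {d : ℕ} {ψ : Fin 2 × Fin d → ℂ} (hψ : star ψ ⬝ᵥ ψ = 1) :
    pureTangle ψ ∈ Icc (0 : ℝ) 1 := by
  rw [pureTangle_eq_four_mul_re_det hψ]
  exact (isDensityMatrix_ptraceA_outer hψ).four_mul_re_det_mem_Icc

end Qubit

section EntropyOfTangle

/-- The entropy of entanglement of a pure qubit–qudit state as a function of its tangle `τ`. -/
def entropyOfTangle (τ : ℝ) : ℝ := binEnt (1 / 2 + (1 / 2) * √(1 - τ))

theorem binEnt_eq_binEntropy_div_log_two (y : ℝ) : binEnt y = Real.binEntropy y / Real.log 2 := by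
  rw [Real.binEntropy_eq_negMulLog_add_negMulLog_one_sub]
  simp only [binEnt, Real.negMulLog, Real.logb]
  ring

theorem binEnt_one_sub (y : ℝ) : binEnt (1 - y) = binEnt y := by
  simp only [binEnt_eq_binEntropy_div_log_two, Real.binEntropy_one_sub]

theorem entropyOfTangle_four_mul_mul_one_sub (x : ℝ) :
    entropyOfTangle (4 * (x * (1 - x))) = binEnt x := by
  have sqrt_eq_abs : √(1 - 4 * (x * (1 - x))) = |2 * x - 1| := by
    rw [← Real.sqrt_sq_eq_abs]
    congr 1
    ring
  rw [entropyOfTangle, sqrt_eq_abs]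
  rcases abs_choice (2 * x - 1) with habs | habs <;> rw [habs]
  · congr 1
    ring
  · rw [← binEnt_one_sub x]
    congr 1
    ring

theorem pureEnt_eq_entropyOfTangle {d : ℕ} {ψ : Fin 2 × Fin d → ℂ} (hψ : star ψ ⬝ᵥ ψ = 1) :
    pureEnt ψ = entropyOfTangle (pureTangle ψ) := by
  have hσ := isDensityMatrix_ptraceA_outer hψ
  rw [pureTangle_eq_four_mul_re_det hψ,
    re_det_eq_eigenvalues_zero_mul_one_sub hσ.1.isHermitian hσ.2,
    entropyOfTangle_four_mul_mul_one_sub, pureEnt,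
    vnEntropy_eq_binEnt_eigenvalues_zero hσ.1.isHermitian hσ.2]

theorem entropyOfTangle_nonneg {τ : ℝ} (hτ : 0 ≤ τ) : 0 ≤ entropyOfTangle τ := by
  have sqrt_le_one : √(1 - τ) ≤ 1 := Real.sqrt_le_one.2 (by linarith)
  rw [entropyOfTangle, binEnt_eq_binEntropy_div_log_two]
  exact div_nonneg (Real.binEntropy_nonneg (by positivity) (by linarith))
    (Real.log_nonneg one_le_two)

theorem continuous_entropyOfTangle : Continuous entropyOfTangle := by
  unfold entropyOfTangle
  simp only [binEnt_eq_binEntropy_div_log_two]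
  fun_prop

theorem hasSum_artanh {x : ℝ} (hx : |x| < 1) :
    HasSum (fun k : ℕ => x ^ (2 * k + 1) / (2 * k + 1)) (Real.artanh x) := by
  obtain ⟨neg_one_lt, lt_one⟩ := abs_lt.1 hx
  rw [Real.artanh_eq_half_log ⟨neg_one_lt.le, lt_one.le⟩,
    Real.log_div (by linarith) (by linarith)]
  convert! (Real.hasSum_log_sub_log_of_abs_lt_one hx).mul_left (1 / 2) using 2
  ring

theorem monotoneOn_artanh_div_self :
    MonotoneOn (fun s : ℝ => Real.artanh s / s) (Ioo 0 1) := by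
  have hasSum_div {s : ℝ} (hs : s ∈ Ioo (0 : ℝ) 1) :
      HasSum (fun k : ℕ => s ^ (2 * k) / (2 * k + 1)) (Real.artanh s / s) := by
    have s_ne_zero : s ≠ 0 := hs.1.ne'
    convert! (hasSum_artanh (abs_lt.2 ⟨by linarith [hs.1], hs.2⟩)).div_const s using 2
    rw [pow_succ]
    field_simp
  intro s hs t ht hst
  refine hasSum_le (fun k => ?_) (hasSum_div hs) (hasSum_div ht)
  have s_nonneg : 0 ≤ s := hs.1.le
  gcongr

theorem sqrt_one_sub_mem_Ioo {τ : ℝ} (hτ : τ ∈ Ioo (0 : ℝ) 1) : √(1 - τ) ∈ Ioo (0 : ℝ) 1 :=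
  ⟨Real.sqrt_pos.2 (by linarith [hτ.2]), (Real.sqrt_lt' one_pos).2 (by linarith [hτ.1])⟩

theorem log_sub_log_eq_neg_two_mul_artanh {s : ℝ} (hs : s ∈ Ioo (-1 : ℝ) 1) :
    Real.log (1 - (1 / 2 + 1 / 2 * s)) - Real.log (1 / 2 + 1 / 2 * s) = -(2 * Real.artanh s) := by
  obtain ⟨neg_one_lt, lt_one⟩ := hs
  have one_sub_eq : 1 - (1 / 2 + 1 / 2 * s) = (1 - s) / 2 := by ring
  have add_eq : 1 / 2 + 1 / 2 * s = (1 + s) / 2 := by ring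
  rw [Real.artanh_eq_half_log ⟨neg_one_lt.le, lt_one.le⟩, one_sub_eq, add_eq,
    Real.log_div (by linarith) two_ne_zero, Real.log_div (by linarith) two_ne_zero,
    Real.log_div (by linarith) (by linarith)]
  ring

theorem hasDerivAt_entropyOfTangle {τ : ℝ} (hτ : τ ∈ Ioo (0 : ℝ) 1) :
    HasDerivAt entropyOfTangle (Real.artanh √(1 - τ) / √(1 - τ) / (2 * Real.log 2)) τ := by
  have hs := sqrt_one_sub_mem_Ioo hτ
  have hinner : HasDerivAt (fun t : ℝ => 1 / 2 + (1 / 2) * √(1 - t))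
      ((1 / 2) * ((-1) / (2 * √(1 - τ)))) τ :=
    ((((hasDerivAt_id τ).const_sub 1).sqrt (sub_pos.2 hτ.2).ne').const_mul (1 / 2)).const_add _
  have houter := Real.hasDerivAt_binEntropy (p := 1 / 2 + (1 / 2) * √(1 - τ))
    (by linarith [hs.1]) (by linarith [hs.2])
  rw [log_sub_log_eq_neg_two_mul_artanh ⟨by linarith [hs.1], hs.2⟩] at houter
  have hcomp := (houter.comp τ hinner).div_const (Real.log 2)
  convert! hcomp using 1
  · exact funext fun _ => binEnt_eq_binEntropy_div_log_two _
  · field_simp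

theorem concaveOn_entropyOfTangle : ConcaveOn ℝ (Icc 0 1) entropyOfTangle := by
  refine AntitoneOn.concaveOn_of_deriv (convex_Icc 0 1) continuous_entropyOfTangle.continuousOn
    ?_ ?_ <;> rw [interior_Icc]
  · exact fun τ hτ => (hasDerivAt_entropyOfTangle hτ).differentiableAt.differentiableWithinAt
  · intro τ hτ τ' hτ' hle
    rw [(hasDerivAt_entropyOfTangle hτ).deriv, (hasDerivAt_entropyOfTangle hτ').deriv]
    have slope_le := monotoneOn_artanh_div_self (sqrt_one_sub_mem_Ioo hτ')
      (sqrt_one_sub_mem_Ioo hτ) (Real.sqrt_le_sqrt (by linarith))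
    exact div_le_div_of_nonneg_right slope_le (by positivity)

end EntropyOfTangle

theorem eof_upper_bound_rank_two_general {d : ℕ}
    (ρ : Matrix (Fin 2 × Fin d) (Fin 2 × Fin d) ℂ) (hρ : IsDensityMatrix ρ) :
    EoF ρ ≤ binEnt (1 / 2 + (1 / 2) * Real.sqrt (1 - Itangle ρ)) := by
  rw [EoF_eq_convexRoof, Itangle_eq_convexRoof]
  refine convexRoof_le_map_convexRoof (c := 0) concaveOn_entropyOfTangle
    continuous_entropyOfTangle.continuousOn isClosed_Icc bddBelow_Icc
    (fun ψ hψ => pureTangle_mem_Icc hψ) (fun ψ hψ => ?_)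
    (fun ψ hψ => (pureEnt_eq_entropyOfTangle hψ).le) (hρ.ensembleAverages_nonempty _)
  rw [pureEnt_eq_entropyOfTangle hψ]
  exact entropyOfTangle_nonneg (pureTangle_mem_Icc hψ).1

/-- For a rank-≤2 density matrix of a qubit and a qudit, the entanglement of formation
satisfies F(ρ) ≤ H(1/2 + (1/2)√(1 − τ(ρ))). -/
theorem eof_upper_bound_rank_two {d : ℕ}
    (ρ : Matrix (Fin 2 × Fin d) (Fin 2 × Fin d) ℂ)
    (hρ : IsDensityMatrix ρ) (hrank : ρ.rank ≤ 2) :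
    EoF ρ ≤ binEnt (1 / 2 + (1 / 2) * Real.sqrt (1 - Itangle ρ)) := by
  exact eof_upper_bound_rank_two_general ρ hρ
end
end
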